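/- (Generalised Debever identity) Let X be a (2,2) double form on 4-dimensional Minkowski space which is irreducible in the sense that there exist signs ε, ε' ∈ {1, −1} with X_{cdab} = ε X_{abcd} and (→⋆X)_{cdab} = ε' (→⋆X)_{abcd} for all indices. Then for all a,b,c,d: (→⋆X)^{a}{}_{k₁}{}^{b}{}_{k₂} (→⋆X)_{c}{}^{k₁}{}_{d}{}^{k₂} − X^{a}{}_{k₁ d k₂} X_{c}{}^{k₁ b k₂} = −(1/2) I δ^{a}_{c} δ^{b}_{d}, where I = (1/4) X_{pqrs} X^{pqrs} and all indices are raised with η. -/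

import Mathlib

noncomputable section

/-- The Minkowski metric `η = diag(+1,−1,−1,−1)` on `ℝ⁴`.  Its inverse has the
same components, so `mink` is also used to raise indices. -/
def mink : Fin 4 → Fin 4 → ℝ :=
  fun a b => if a = b then (if a = 0 then 1 else -1) else 0

/-- The totally antisymmetric Levi-Civita tensor with all indices down and
`ε₀₁₂₃ = +1`, via the Vandermonde-product formula. -/
def lev : Fin 4 → Fin 4 → Fin 4 → Fin 4 → ℝ :=
  fun a b c d =>
    (((b : ℕ) : ℝ) - ((a : ℕ) : ℝ)) * (((c : ℕ) : ℝ) - ((a : ℕ) : ℝ)) *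
    (((d : ℕ) : ℝ) - ((a : ℕ) : ℝ)) * (((c : ℕ) : ℝ) - ((b : ℕ) : ℝ)) *
    (((d : ℕ) : ℝ) - ((b : ℕ) : ℝ)) * (((d : ℕ) : ℝ) - ((c : ℕ) : ℝ)) / 12

/-- `ε_{ab}{}^{pq}`: the Levi-Civita tensor with its last two indices raised
by the Minkowski metric. -/
def levUp (a b p q : Fin 4) : ℝ := ∑ r, ∑ s, mink p r * mink q s * lev a b r s

/-- The Kronecker delta on `Fin 4`. -/
def kd (a b : Fin 4) : ℝ := if a = b then 1 else 0

/-- Hodge dual `⋆F_{ab} = (1/2) ε_{ab}{}^{pq} F_{pq}` of a rank-2 tensor. -/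
def hodge2 (F : Fin 4 → Fin 4 → ℝ) (a b : Fin 4) : ℝ :=
  (1/2) * ∑ p, ∑ q, levUp a b p q * F p q

/-- Left Hodge dual `←⋆X_{abcd} = (1/2) ε_{ab}{}^{pq} X_{pqcd}`. -/
def leftD (X : Fin 4 → Fin 4 → Fin 4 → Fin 4 → ℝ) (a b c d : Fin 4) : ℝ :=
  (1/2) * ∑ p, ∑ q, levUp a b p q * X p q c d

/-- Right Hodge dual `→⋆X_{abcd} = (1/2) ε_{cd}{}^{pq} X_{abpq}`. -/
def rightD (X : Fin 4 → Fin 4 → Fin 4 → Fin 4 → ℝ) (a b c d : Fin 4) : ℝ :=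
  (1/2) * ∑ p, ∑ q, levUp c d p q * X a b p q

/-- Double Hodge dual `⋆⋆X_{abcd} = (1/4) ε_{ab}{}^{pq} ε_{cd}{}^{rs} X_{pqrs}`. -/
def dblD (X : Fin 4 → Fin 4 → Fin 4 → Fin 4 → ℝ) (a b c d : Fin 4) : ℝ :=
  (1/4) * ∑ p, ∑ q, ∑ r, ∑ s, levUp a b p q * levUp c d r s * X p q r s

/-- First trace `X_{ac} = η^{bd} X_{abcd}` of a (2,2) double form. -/
def tr1 (X : Fin 4 → Fin 4 → Fin 4 → Fin 4 → ℝ) (a c : Fin 4) : ℝ :=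
  ∑ b, ∑ d, mink b d * X a b c d

/-- Second trace `X = η^{ac} X_{ac}` of a (2,2) double form. -/
def tr2 (X : Fin 4 → Fin 4 → Fin 4 → Fin 4 → ℝ) : ℝ :=
  ∑ a, ∑ c, mink a c * tr1 X a c

/-- Hatted (trace-free) tensor `X̂_{ab} = X_{ab} − (1/4) X η_{ab}`. -/
def hatT (X : Fin 4 → Fin 4 → Fin 4 → Fin 4 → ℝ) (a b : Fin 4) : ℝ :=
  tr1 X a b - (1/4) * tr2 X * mink a b

/-- Rank-2 tensor with both indices raised by the Minkowski metric. -/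
def up2 (F : Fin 4 → Fin 4 → ℝ) (a b : Fin 4) : ℝ :=
  ∑ p, ∑ q, mink a p * mink b q * F p q

/-- Rank-4 tensor with all indices raised by the Minkowski metric. -/
def up4 (X : Fin 4 → Fin 4 → Fin 4 → Fin 4 → ℝ) (a b c d : Fin 4) : ℝ :=
  ∑ p, ∑ q, ∑ r, ∑ s, mink a p * mink b q * mink c r * mink d s * X p q r s

/-- `Y^{a}{}_{k₁}{}^{b}{}_{k₂}`: indices 1 and 3 raised. -/
def mix13 (Y : Fin 4 → Fin 4 → Fin 4 → Fin 4 → ℝ) (a k₁ b k₂ : Fin 4) : ℝ :=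
  ∑ p, ∑ q, mink a p * mink b q * Y p k₁ q k₂

/-- `Y_{c}{}^{k₁}{}_{d}{}^{k₂}`: indices 2 and 4 raised. -/
def mix24 (Y : Fin 4 → Fin 4 → Fin 4 → Fin 4 → ℝ) (c k₁ d k₂ : Fin 4) : ℝ :=
  ∑ p, ∑ q, mink k₁ p * mink k₂ q * Y c p d q

/-- `Y^{a}{}_{k₁ d k₂}`: index 1 raised. -/
def up1 (Y : Fin 4 → Fin 4 → Fin 4 → Fin 4 → ℝ) (a k₁ d k₂ : Fin 4) : ℝ :=
  ∑ p, mink a p * Y p k₁ d k₂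

/-- `Y_{c}{}^{k₁ b k₂}`: indices 2, 3 and 4 raised. -/
def mix234 (Y : Fin 4 → Fin 4 → Fin 4 → Fin 4 → ℝ) (c k₁ b k₂ : Fin 4) : ℝ :=
  ∑ p, ∑ q, ∑ r, mink k₁ p * mink b q * mink k₂ r * Y c p q r

/-!
Since `ε` is a determinant of Kronecker deltas, contracting one index of a product of two of them
yields, for two-forms, `⋆F_{bk} ⋆G_d{}^k − F_{dk} G_b{}^k = −(1/2) η_{bd} F_{rs} G^{rs}`, whose
trace says that `⋆` is an anti-isometry.  Applied to the right pair of `X`, this turns the left-hand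
side of the Debever identity into `−(1/2) δ^b_d T^a{}_c` with `T_{ac} = X_{akrs} X_c{}^{krs}`.
Applied to the left pair, it shows that `T` is pure trace: if the left dual of `X` is `±` its right
dual, then dualising either pair turns `T` into `−T`, so `−T_{ac} − T_{ca}` is a multiple of
`η_{ac}`.
-/

lemma mink_mul_self (a : Fin 4) : mink a a * mink a a = 1 := by
  by_cases h : a = 0 <;> simp [mink, h]

lemma mink_eq_mul_kd (a b : Fin 4) : mink a b = mink a a * kd a b := by
  simp [mink, kd]

lemma sum_mink_mul (a : Fin 4) (f : Fin 4 → ℝ) : ∑ p, mink a p * f p = mink a a * f a := by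
  simp [mink]

section LeviCivita

open Matrix

lemma lev_eq_det (v : Fin 4 → Fin 4) :
    lev (v 0) (v 1) (v 2) (v 3) = ((1 : Matrix (Fin 4) (Fin 4) ℝ).submatrix v id).det := by
  let V (w : Fin 4 → Fin 4) : Matrix (Fin 4) (Fin 4) ℝ := vandermonde fun i => ((w i : ℕ) : ℝ)
  have det_V (w : Fin 4 → Fin 4) : (V w).det = 12 * lev (w 0) (w 1) (w 2) (w 3) := by
    simp [V, det_vandermonde, Fin.prod_univ_succ, lev]
    ring
  have V_eq_mul : V v = (1 : Matrix (Fin 4) (Fin 4) ℝ).submatrix v id * V id :=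
    (one_submatrix_mul v (Equiv.refl _) (V id)).symm
  have det_V_id : (V id).det = 12 := by
    rw [det_V]
    norm_num [lev]
  have h := congrArg det V_eq_mul
  rw [det_mul, det_V, det_V_id] at h
  linarith

lemma lev_mul_lev_eq_det (u v : Fin 4 → Fin 4) :
    lev (u 0) (u 1) (u 2) (u 3) * lev (v 0) (v 1) (v 2) (v 3) =
      ((1 : Matrix (Fin 4) (Fin 4) ℝ).submatrix u v).det := by
  rw [lev_eq_det, lev_eq_det, ← det_transpose (submatrix _ v id), ← det_mul, transpose_submatrix,
    transpose_one, ← submatrix_mul _ _ _ _ _ Function.bijective_id, one_mul]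

lemma sum_lev_mul_lev (b p q d r s : Fin 4) :
    ∑ k, lev b k p q * lev d k r s =
      kd b d * (kd p r * kd q s - kd p s * kd q r) -
        kd b r * (kd p d * kd q s - kd p s * kd q d) +
        kd b s * (kd p d * kd q r - kd p r * kd q d) := by
  have lev_mul (k : Fin 4) : lev b k p q * lev d k r s =
      (of fun i j => kd (![b, k, p, q] i) (![d, k, r, s] j)).det :=
    lev_mul_lev_eq_det ![b, k, p, q] ![d, k, r, s]
  have kd_self (k : Fin 4) : kd k k = 1 := by simp [kd]
  have sum_kd_mul_kd (x y : Fin 4) : ∑ k, kd x k * kd k y = kd x y := by simp [kd]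
  let minor (x y z w : Fin 4) : ℝ := kd x z * kd y w - kd x w * kd y z
  -- With its sign, each of the last three brackets contracts to minus the first one, so the sum
  -- is `4 - 3` times the first one.
  have expand (k : Fin 4) : lev b k p q * lev d k r s =
      (kd b d * minor p q r s - kd b r * minor p q d s + kd b s * minor p q d r) -
        (kd b k * kd k d * minor p q r s - kd b k * kd k r * minor p q d s +
          kd b k * kd k s * minor p q d r) +
        (kd p k * kd k d * minor b q r s - kd p k * kd k r * minor b q d s +
          kd p k * kd k s * minor b q d r) -
        (kd q k * kd k d * minor b p r s - kd q k * kd k r * minor b p d s +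
          kd q k * kd k s * minor b p d r) := by
    rw [lev_mul, det_succ_row_zero]
    simp [det_fin_three, Fin.sum_univ_four, Fin.succAbove, kd_self, minor]
    ring
  simp only [expand, Finset.sum_add_distrib, Finset.sum_sub_distrib, ← Finset.sum_mul,
    sum_kd_mul_kd, Finset.sum_const, Finset.card_univ, Fintype.card_fin, nsmul_eq_mul,
    Nat.cast_ofNat, minor]
  ring

lemma prod_mink_mul_lev (v : Fin 4 → Fin 4) :
    (∏ i, mink (v i) (v i)) * lev (v 0) (v 1) (v 2) (v 3) = -lev (v 0) (v 1) (v 2) (v 3) := by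
  have det_mink : ∏ i, mink i i = -1 := by norm_num [mink, Fin.prod_univ_succ]
  rw [lev_eq_det, ← det_mul_column, ← neg_one_mul, ← det_mink, ← det_mul_row]
  congr 1
  ext i j
  by_cases h : v i = j <;> simp [one_apply, h]

end LeviCivita

/-- The contraction `F_{ak} G_c{}^k` of the last indices of two tensors; as `η` is diagonal, only
the entries `η^{kk}` contribute. -/
def minkContr (F G : Fin 4 → Fin 4 → ℝ) (a c : Fin 4) : ℝ :=
  ∑ k, mink k k * (F a k * G c k)

/-- The full contraction `F_{rs} G^{rs}` of two tensors. -/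
def minkInner (F G : Fin 4 → Fin 4 → ℝ) : ℝ :=
  ∑ r, ∑ s, mink r r * mink s s * (F r s * G r s)

lemma minkInner_eq_sum_minkContr (F G : Fin 4 → Fin 4 → ℝ) :
    minkInner F G = ∑ a, mink a a * minkContr F G a a := by
  simp only [minkInner, minkContr, Finset.mul_sum, mul_assoc]

lemma sum_lev_contr_mul_lev_contr {F H : Fin 4 → Fin 4 → ℝ} (hF : ∀ a b, F a b = -F b a)
    (hH : ∀ a b, H a b = -H b a) (b d : Fin 4) :
    ∑ k, (∑ p, ∑ q, lev b k p q * F p q) * (∑ r, ∑ s, lev d k r s * H r s) =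
      2 * kd b d * (∑ p, ∑ q, F p q * H p q) - 4 * ∑ k, F d k * H b k := by
  have swap : ∑ p, ∑ q, F q p * H p q = -∑ p, ∑ q, F p q * H p q := by
    simp only [← Finset.sum_neg_distrib, ← neg_mul, ← hF]
  calc _ = ∑ r, ∑ s, ∑ p, ∑ q, (∑ k, lev b k p q * lev d k r s) * (F p q * H r s) := by
        simp only [Finset.mul_sum, Finset.sum_mul]
        rw [Finset.sum_comm]
        refine Finset.sum_congr rfl fun r _ => ?_
        rw [Finset.sum_comm]
        refine Finset.sum_congr rfl fun s _ => ?_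
        rw [Finset.sum_comm]
        refine Finset.sum_congr rfl fun p _ => ?_
        rw [Finset.sum_comm]
        exact Finset.sum_congr rfl fun q _ => Finset.sum_congr rfl fun k _ =>
          mul_mul_mul_comm ..
    _ = kd b d * (∑ p, ∑ q, F p q * H p q) - kd b d * (∑ p, ∑ q, F q p * H p q)
          - (∑ k, F d k * H b k - ∑ k, F k d * H b k)
          + (∑ k, F d k * H k b - ∑ k, F k d * H k b) := by
        simp [sum_lev_mul_lev, kd, sub_mul, add_mul, mul_sub, Finset.sum_add_distrib,
          Finset.sum_sub_distrib]
    _ = _ := by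
        simp only [swap, hF _ d, hH _ b, neg_mul, mul_neg, Finset.sum_neg_distrib]
        ring

lemma levUp_eq (a b p q : Fin 4) : levUp a b p q = mink p p * mink q q * lev a b p q := by
  simp only [levUp, mul_assoc, ← Finset.mul_sum, sum_mink_mul]

lemma hodge2_eq_sum_lev (F : Fin 4 → Fin 4 → ℝ) (a b : Fin 4) :
    hodge2 F a b = (1/2) * ∑ p, ∑ q, lev a b p q * (mink p p * mink q q * F p q) := by
  simp only [hodge2, levUp_eq]
  congr! 3
  ring_nf

lemma mink_mul_hodge2 (F : Fin 4 → Fin 4 → ℝ) (a b : Fin 4) :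
    mink a a * mink b b * hodge2 F a b = -(1/2) * ∑ p, ∑ q, lev a b p q * F p q := by
  simp only [hodge2, levUp_eq, Finset.mul_sum]
  refine Finset.sum_congr rfl fun p _ => Finset.sum_congr rfl fun q _ => ?_
  have h := prod_mink_mul_lev ![a, b, p, q]
  simp only [Fin.prod_univ_four, Matrix.cons_val] at h
  linear_combination (1/2) * F p q * h

lemma minkContr_hodge2_sub {F G : Fin 4 → Fin 4 → ℝ} (hF : ∀ a b, F a b = -F b a)
    (hG : ∀ a b, G a b = -G b a) (b d : Fin 4) :
    minkContr (hodge2 F) (hodge2 G) b d - minkContr F G d b =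
      -(1/2) * mink b d * minkInner F G := by
  let H (p q : Fin 4) : ℝ := mink p p * mink q q * G p q
  have hH (p q : Fin 4) : H p q = -H q p := by
    simp only [H, hG p q]
    ring
  have h := sum_lev_contr_mul_lev_contr hF hH b d
  have contr_hodge : minkContr (hodge2 F) (hodge2 G) b d = -(1/4) * mink b b *
      ∑ k, (∑ p, ∑ q, lev b k p q * F p q) * (∑ r, ∑ s, lev d k r s * H r s) := by
    simp only [minkContr, Finset.mul_sum (s := Finset.univ) (a := -(1/4) * mink b b)]
    refine Finset.sum_congr rfl fun k _ => ?_
    rw [hodge2_eq_sum_lev G]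
    linear_combination (1/2) * mink b b * (∑ r, ∑ s, lev d k r s * H r s) * mink_mul_hodge2 F b k
      - (1/2) * mink k k * hodge2 F b k * (∑ r, ∑ s, lev d k r s * H r s) * mink_mul_self b
  have contr_raised : mink b b * ∑ k, F d k * H b k = minkContr F G d b := by
    simp only [minkContr, Finset.mul_sum, H]
    refine Finset.sum_congr rfl fun k _ => ?_
    linear_combination mink k k * F d k * G b k * mink_mul_self b
  have inner_raised : ∑ p, ∑ q, F p q * H p q = minkInner F G := by
    simp only [minkInner, H, mul_left_comm (F _ _)]
  rw [contr_hodge, h, inner_raised, mink_eq_mul_kd b d, ← contr_raised]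
  ring

lemma minkInner_hodge2 {F G : Fin 4 → Fin 4 → ℝ} (hF : ∀ a b, F a b = -F b a)
    (hG : ∀ a b, G a b = -G b a) :
    minkInner (hodge2 F) (hodge2 G) = -minkInner F G := by
  have trace : ∑ b, mink b b * (minkContr (hodge2 F) (hodge2 G) b b - minkContr F G b b) =
      ∑ b : Fin 4, -(1/2) * minkInner F G := by
    refine Finset.sum_congr rfl fun b _ => ?_
    rw [minkContr_hodge2_sub hF hG]
    linear_combination -(1/2) * minkInner F G * mink_mul_self b
  simp only [mul_sub, Finset.sum_sub_distrib, ← minkInner_eq_sum_minkContr, Finset.sum_const,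
    Finset.card_univ, Fintype.card_fin, nsmul_eq_mul, Nat.cast_ofNat] at trace
  linarith

/-- The contraction `X_{akrs} X_c{}^{krs}`, quadratic in `X`. -/
def minkTripleContr (X : Fin 4 → Fin 4 → Fin 4 → Fin 4 → ℝ) (a c : Fin 4) : ℝ :=
  ∑ k, mink k k * minkInner (X a k) (X c k)

section DoubleForm

variable {X : Fin 4 → Fin 4 → Fin 4 → Fin 4 → ℝ}

lemma minkTripleContr_comm (a c : Fin 4) : minkTripleContr X a c = minkTripleContr X c a := by
  simp only [minkTripleContr, minkInner, mul_comm (X a _ _ _)]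

lemma minkTripleContr_eq_sum_minkContr (a c : Fin 4) :
    minkTripleContr X a c = ∑ r, ∑ s, mink r r * mink s s *
      minkContr (fun p q => X p q r s) (fun p q => X p q r s) a c := by
  simp only [minkTripleContr, minkInner, minkContr, Finset.mul_sum]
  rw [Finset.sum_comm]
  refine Finset.sum_congr rfl fun r _ => ?_
  rw [Finset.sum_comm]
  exact Finset.sum_congr rfl fun s _ => Finset.sum_congr rfl fun k _ => mul_left_comm ..

lemma sum_mul_up4 (Y : Fin 4 → Fin 4 → Fin 4 → Fin 4 → ℝ) :
    ∑ p, ∑ q, ∑ r, ∑ s, Y p q r s * up4 Y p q r s = ∑ a, mink a a * minkTripleContr Y a a := by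
  simp only [up4, minkTripleContr, minkInner, mul_assoc, ← Finset.mul_sum, sum_mink_mul]
  simp only [Finset.mul_sum]
  congr! 4
  ring

lemma minkTripleContr_rightD (hX : ∀ a b c d, X a b c d = -X a b d c) (a c : Fin 4) :
    minkTripleContr (rightD X) a c = -minkTripleContr X a c := by
  have h (k : Fin 4) : minkInner (rightD X a k) (rightD X c k) = -minkInner (X a k) (X c k) :=
    minkInner_hodge2 (hX a k) (hX c k)
  simp only [minkTripleContr, h, mul_neg, Finset.sum_neg_distrib]

lemma minkTripleContr_leftD_sub (hX : ∀ a b c d, X a b c d = -X b a c d) (a c : Fin 4) :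
    minkTripleContr (leftD X) a c - minkTripleContr X c a =
      -(1/2) * mink a c * ∑ r, ∑ s, mink r r * mink s s *
        minkInner (fun p q => X p q r s) (fun p q => X p q r s) := by
  have h (r s : Fin 4) :
      minkContr (fun p q => leftD X p q r s) (fun p q => leftD X p q r s) a c -
          minkContr (fun p q => X p q r s) (fun p q => X p q r s) c a =
        -(1/2) * mink a c * minkInner (fun p q => X p q r s) (fun p q => X p q r s) :=
    minkContr_hodge2_sub (fun p q => hX p q r s) (fun p q => hX p q r s) a c
  simp only [minkTripleContr_eq_sum_minkContr, ← Finset.sum_sub_distrib, ← mul_sub, h,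
    Finset.mul_sum, mul_left_comm (-(1/2) * mink a c)]

lemma minkTripleContr_eq_mul_trace (h1 : ∀ a b c d, X a b c d = -X b a c d)
    (h2 : ∀ a b c d, X a b c d = -X a b d c) {σ : ℝ} (hσ : σ ^ 2 = 1)
    (hdual : ∀ a b c d, leftD X a b c d = σ * rightD X a b c d) (a c : Fin 4) :
    minkTripleContr X a c = (1/4) * mink a c * ∑ b, mink b b * minkTripleContr X b b := by
  set S := ∑ r, ∑ s, mink r r * mink s s *
    minkInner (fun p q => X p q r s) (fun p q => X p q r s)
  have leftD_eq (a c : Fin 4) : minkTripleContr (leftD X) a c = -minkTripleContr X a c := by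
    rw [← minkTripleContr_rightD h2]
    simp only [minkTripleContr, minkInner, hdual, mul_mul_mul_comm σ, ← sq, hσ, one_mul]
  have eq_mul_S (a c : Fin 4) : minkTripleContr X a c = (1/4) * mink a c * S := by
    linarith [minkTripleContr_leftD_sub h1 a c, leftD_eq a c, minkTripleContr_comm (X := X) c a]
  have trace_eq : ∑ b, mink b b * minkTripleContr X b b = S := by
    have h (b : Fin 4) : mink b b * minkTripleContr X b b = (1/4) * S := by
      rw [eq_mul_S]
      linear_combination (1/4) * S * mink_mul_self b
    simp [h]
  rw [trace_eq, eq_mul_S]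

lemma sum_minkContr_rightD_sub (hX : ∀ a b c d, X a b c d = -X a b d c) (a b c d : Fin 4) :
    ∑ k, mink k k * minkContr (rightD X a k) (rightD X c k) b d -
        ∑ k, mink k k * minkContr (X a k) (X c k) d b =
      -(1/2) * mink b d * minkTripleContr X a c := by
  have h (k : Fin 4) : minkContr (rightD X a k) (rightD X c k) b d -
      minkContr (X a k) (X c k) d b = -(1/2) * mink b d * minkInner (X a k) (X c k) :=
    minkContr_hodge2_sub (hX a k) (hX c k) b d
  simp only [← Finset.sum_sub_distrib, ← mul_sub, h, minkTripleContr, Finset.mul_sum,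
    mul_left_comm (-(1/2) * mink b d)]

lemma sum_mix13_mul_mix24 (Y : Fin 4 → Fin 4 → Fin 4 → Fin 4 → ℝ) (a b c d : Fin 4) :
    ∑ k₁, ∑ k₂, mix13 Y a k₁ b k₂ * mix24 Y c k₁ d k₂ =
      mink a a * mink b b * ∑ k, mink k k * minkContr (Y a k) (Y c k) b d := by
  simp only [mix13, mix24, minkContr, mul_assoc, ← Finset.mul_sum, sum_mink_mul]
  simp only [Finset.mul_sum]
  congr! 2
  ring

lemma sum_up1_mul_mix234 (Y : Fin 4 → Fin 4 → Fin 4 → Fin 4 → ℝ) (a b c d : Fin 4) :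
    ∑ k₁, ∑ k₂, up1 Y a k₁ d k₂ * mix234 Y c k₁ b k₂ =
      mink a a * mink b b * ∑ k, mink k k * minkContr (Y a k) (Y c k) d b := by
  simp only [up1, mix234, minkContr, mul_assoc, ← Finset.mul_sum, sum_mink_mul]
  simp only [Finset.mul_sum]
  congr! 2
  ring

lemma leftD_eq_mul_rightD {e e' : ℝ} (hX : ∀ a b c d, X c d a b = e * X a b c d)
    (hY : ∀ a b c d, rightD X c d a b = e' * rightD X a b c d) (a b c d : Fin 4) :
    leftD X a b c d = e * e' * rightD X a b c d := by
  calc leftD X a b c d = e * rightD X c d a b := by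
        simp only [leftD, rightD, Finset.mul_sum, hX c d]
        congr! 2
        ring
    _ = e * e' * rightD X a b c d := by rw [hY, mul_assoc]

end DoubleForm

/-- For fixed `σ` the hypothesis on the duals is linear in `X`: it admits sums of irreducible pieces
with the same `σ`, such as a Weyl piece plus a pair-antisymmetric piece with pair-antisymmetric
dual, which are not irreducible. -/
theorem generalised_debever_general (X : Fin 4 → Fin 4 → Fin 4 → Fin 4 → ℝ)
    (h1 : ∀ a b c d, X a b c d = -X b a c d)
    (h2 : ∀ a b c d, X a b c d = -X a b d c) {σ : ℝ} (hσ : σ ^ 2 = 1)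
    (hdual : ∀ a b c d, leftD X a b c d = σ * rightD X a b c d) (a b c d : Fin 4) :
    (∑ k₁, ∑ k₂, mix13 (rightD X) a k₁ b k₂ * mix24 (rightD X) c k₁ d k₂) -
        (∑ k₁, ∑ k₂, up1 X a k₁ d k₂ * mix234 X c k₁ b k₂) =
      -(1/2) * ((1/4) * ∑ p, ∑ q, ∑ r, ∑ s, X p q r s * up4 X p q r s) *
        kd a c * kd b d := by
  rw [sum_mix13_mul_mix24, sum_up1_mul_mix234, ← mul_sub, sum_minkContr_rightD_sub h2,
    minkTripleContr_eq_mul_trace h1 h2 hσ hdual, sum_mul_up4, mink_eq_mul_kd a c,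
    mink_eq_mul_kd b d]
  generalize ∑ p, mink p p * minkTripleContr X p p = N
  linear_combination -(1/8) * N * kd a c * kd b d *
    (mink b b * mink b b * mink_mul_self a + mink_mul_self b)

/-- Generalised Debever identity for an irreducible (2,2) double form. -/
theorem generalised_debever (X : Fin 4 → Fin 4 → Fin 4 → Fin 4 → ℝ)
    (h1 : ∀ a b c d, X a b c d = -X b a c d)
    (h2 : ∀ a b c d, X a b c d = -X a b d c)
    (hirr : ∃ e e' : ℝ, (e = 1 ∨ e = -1) ∧ (e' = 1 ∨ e' = -1) ∧
      (∀ a b c d, X c d a b = e * X a b c d) ∧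
      (∀ a b c d, rightD X c d a b = e' * rightD X a b c d)) :
    ∀ a b c d,
      (∑ k₁, ∑ k₂, mix13 (rightD X) a k₁ b k₂ * mix24 (rightD X) c k₁ d k₂) -
        (∑ k₁, ∑ k₂, up1 X a k₁ d k₂ * mix234 X c k₁ b k₂) =
      -(1/2) * ((1/4) * ∑ p, ∑ q, ∑ r, ∑ s, X p q r s * up4 X p q r s) *
        kd a c * kd b d := by
  obtain ⟨e, e', he, he', hX, hY⟩ := hirr
  exact generalised_debever_general X h1 h2
    (by rw [mul_pow, sq_eq_one_iff.2 he, sq_eq_one_iff.2 he', one_mul]) (leftD_eq_mul_rightD hX hY)
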